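/- arXiv:1806.04498 — 3 statements merged into one kernel-verified Lean document; each statement's English description precedes it below -/
import Mathlib

section
/- Let K be a field, n a finite nonempty index type, J an n×n matrix over K, and β, γ ∈ K. Define the 2n×2n block matrix M = fromBlocks (β•I + J) (−β•J) I 0. Then det(γ•I₍₂ₙ₎ − M) = (γ − β)^|n| · det(γ•Iₙ − J), where |n| is the cardinality of the index type. -/
/-- The characteristic determinant of the EMA Jacobian
`M = fromBlocks (β•I + J) (−β•J) I 0` factors as
`(γ − β)^|n| · det(γ•I − J)`. -/
theorem ema_jacobian_char_det {K : Type*} [Field K] {n : Type*} [Fintype n] [Nonempty n]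
    [DecidableEq n] (J : Matrix n n K) (β γ : K) :
    (γ • (1 : Matrix (n ⊕ n) (n ⊕ n) K) -
        Matrix.fromBlocks (β • 1 + J) ((-β) • J) 1 0).det =
      (γ - β) ^ Fintype.card n * (γ • (1 : Matrix n n K) - J).det := by
  -- Conjugating by the shear `[[1, β], [0, 1]]` turns `M` into the block lower triangular
  -- matrix `[[J, 0], [1, β]]`, whatever the values of `β` and `γ`.
  have h : γ • (1 : Matrix (n ⊕ n) (n ⊕ n) K) -
        Matrix.fromBlocks (β • 1 + J) ((-β) • J) 1 0 =
      Matrix.fromBlocks 1 (β • 1) 0 1 *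
        Matrix.fromBlocks (γ • 1 - J) 0 (-1) ((γ - β) • 1) *
        Matrix.fromBlocks 1 ((-β) • 1) 0 1 := by
    rw [← Matrix.fromBlocks_one, Matrix.fromBlocks_smul, sub_eq_add_neg, Matrix.fromBlocks_neg,
      Matrix.fromBlocks_add, Matrix.fromBlocks_multiply, Matrix.fromBlocks_multiply]
    congr 1 <;> simp <;> module
  rw [h, Matrix.det_mul, Matrix.det_mul, Matrix.det_fromBlocks_zero₂₁,
    Matrix.det_fromBlocks_zero₁₂, Matrix.det_fromBlocks_zero₂₁, Matrix.det_smul]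
  simp [mul_comm]
end

section
/- Let J be an n×n complex matrix (n a nonempty finite index type), β ∈ ℂ, and M = fromBlocks (β•I + J) (−β•J) I 0 the associated 2n×2n block matrix. Then a complex number γ is an eigenvalue of M if and only if γ = β or γ is an eigenvalue of J. -/
/-!
In the coordinates `w = u - β v`, `v`, the map `(u, v) ↦ (β u + J u - β J v, u)` becomes
`(w, v) ↦ (J w, w + β v)`, which is block lower triangular with diagonal blocks `J` and `β`.
Hence `det (γ - M) = det (γ - J) * (γ - β) ^ n`, and since the index type is nonempty this
vanishes exactly when `γ = β` or `γ` is an eigenvalue of `J`.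
-/

/-- The characteristic determinant of the EMA Jacobian, obtained by conjugating with the
unipotent change of coordinates `(u, v) ↦ (u - β v, v)`. -/
theorem det_sub_ema {n : Type*} [Fintype n] [DecidableEq n] (J : Matrix n n ℂ) (β γ : ℂ) :
    (algebraMap ℂ (Matrix (n ⊕ n) (n ⊕ n) ℂ) γ -
        Matrix.fromBlocks (β • 1 + J) ((-β) • J) 1 0).det =
      (algebraMap ℂ (Matrix n n ℂ) γ - J).det * (γ - β) ^ Fintype.card n := by
  have key : Matrix.fromBlocks 1 ((-β) • (1 : Matrix n n ℂ)) 0 1 *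
      (algebraMap ℂ (Matrix (n ⊕ n) (n ⊕ n) ℂ) γ -
        Matrix.fromBlocks (β • 1 + J) ((-β) • J) 1 0) =
      Matrix.fromBlocks (algebraMap ℂ (Matrix n n ℂ) γ - J) 0 (-1) ((γ - β) • 1) *
        Matrix.fromBlocks 1 ((-β) • (1 : Matrix n n ℂ)) 0 1 := by
    simp only [Algebra.algebraMap_eq_smul_one, ← Matrix.fromBlocks_one, Matrix.fromBlocks_smul,
      sub_eq_add_neg, Matrix.fromBlocks_neg, Matrix.fromBlocks_add, Matrix.fromBlocks_multiply]
    congr 1 <;> simp [mul_add, smul_smul] <;> module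
  simpa [Matrix.det_mul, Matrix.det_fromBlocks_zero₂₁, Matrix.det_fromBlocks_zero₁₂,
    Matrix.det_smul] using congrArg Matrix.det key

/-- `γ` is an eigenvalue of the EMA Jacobian `M = fromBlocks (β•I + J) (−β•J) I 0`
iff `γ = β` or `γ` is an eigenvalue of `J`. -/
theorem ema_jacobian_eigenvalues {n : Type*} [Fintype n] [Nonempty n] [DecidableEq n]
    (J : Matrix n n ℂ) (β γ : ℂ) :
    γ ∈ spectrum ℂ (Matrix.fromBlocks (β • 1 + J) ((-β) • J) 1 0 :
        Matrix (n ⊕ n) (n ⊕ n) ℂ) ↔ γ = β ∨ γ ∈ spectrum ℂ J := by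
  simp only [spectrum.mem_iff, Matrix.isUnit_iff_isUnit_det, isUnit_iff_ne_zero, not_not,
    det_sub_ema, mul_eq_zero, pow_eq_zero_iff Fintype.card_ne_zero, sub_eq_zero]
  exact or_comm
end

section
/- Let J be an n×n complex matrix (n a nonempty finite index type), β a real number with 0 ≤ β, and M = fromBlocks ((β:ℂ)•I + J) (−(β:ℂ)•J) I 0 the associated 2n×2n block matrix. Then the spectral radius of M equals max(β, ρ(J)), where ρ(J) is the spectral radius of J, i.e. the maximum of the moduli of the eigenvalues of J. -/
/-!
The substitution `u = x - β y` decouples the iteration `(x, y) ↦ ((β + J) x - β J y, x)`: it becomes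
`(u, y) ↦ (J u, u + β y)`. So `M` is similar to the block triangular matrix with diagonal blocks `J`
and `β I`, its spectrum is `σ(J) ∪ {β}`, and taking the supremum of the moduli gives the result.
-/

open Matrix in
/-- The spectrum of a block lower triangular matrix is the union of those of its diagonal blocks. -/
lemma spectrum_fromBlocks_zero₁₂ {m n : Type*} [Fintype m] [Fintype n] [DecidableEq m]
    [DecidableEq n] (A : Matrix m m ℂ) (C : Matrix n m ℂ) (D : Matrix n n ℂ) :
    spectrum ℂ (fromBlocks A 0 C D) = spectrum ℂ A ∪ spectrum ℂ D := by
  ext z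
  have h : algebraMap ℂ (Matrix (m ⊕ n) (m ⊕ n) ℂ) z - fromBlocks A 0 C D =
      fromBlocks (algebraMap ℂ _ z - A) 0 (-C) (algebraMap ℂ _ z - D) := by
    simp only [Algebra.algebraMap_eq_smul_one]
    rw [← fromBlocks_one, fromBlocks_smul, sub_eq_add_neg, fromBlocks_neg, fromBlocks_add]
    simp [sub_eq_add_neg]
  rw [Set.mem_union, spectrum.mem_iff, spectrum.mem_iff, spectrum.mem_iff, h,
    isUnit_fromBlocks_zero₁₂, not_and_or]

open Matrix in
lemma spectrum_ema_jacobian {n : Type*} [Fintype n] [Nonempty n] [DecidableEq n]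
    (J : Matrix n n ℂ) (b : ℂ) :
    spectrum ℂ (fromBlocks (b • 1 + J) ((-b) • J) 1 0 : Matrix (n ⊕ n) (n ⊕ n) ℂ) =
      spectrum ℂ J ∪ {b} := by
  -- the change of variables `(x, y) ↦ (x - b y, y)` and its inverse
  let P : (Matrix (n ⊕ n) (n ⊕ n) ℂ)ˣ :=
    { val := fromBlocks 1 (-(b • 1)) 0 1
      inv := fromBlocks 1 (b • 1) 0 1
      val_inv := by simp [fromBlocks_multiply]
      inv_val := by simp [fromBlocks_multiply] }
  have h : (P : Matrix (n ⊕ n) (n ⊕ n) ℂ) * fromBlocks (b • 1 + J) ((-b) • J) 1 0 *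
      (↑P⁻¹ : Matrix (n ⊕ n) (n ⊕ n) ℂ) = fromBlocks J 0 1 (b • 1) := by
    change fromBlocks 1 (-(b • 1)) 0 1 * _ * fromBlocks 1 (b • 1) 0 1 = _
    simp [fromBlocks_multiply]
  rw [← spectrum.units_conjugate (u := P), h, spectrum_fromBlocks_zero₁₂,
    ← Algebra.algebraMap_eq_smul_one, spectrum.scalar_eq]

/-- The spectral radius of the EMA Jacobian `M = fromBlocks (β•I + J) (−β•J) I 0`
equals `max β ρ(J)`, where `ρ(J)` is the spectral radius of `J`. -/
theorem ema_jacobian_spectralRadius {n : Type*} [Fintype n] [Nonempty n] [DecidableEq n]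
    (J : Matrix n n ℂ) (β : ℝ) (hβ : 0 ≤ β) :
    spectralRadius ℂ (Matrix.fromBlocks ((β : ℂ) • 1 + J) ((-(β : ℂ)) • J) 1 0 :
        Matrix (n ⊕ n) (n ⊕ n) ℂ) =
      max (ENNReal.ofReal β) (spectralRadius ℂ J) := by
  have hn : (‖(β : ℂ)‖₊ : ENNReal) = ENNReal.ofReal β := by
    rw [← enorm_eq_nnnorm, ← ofReal_norm, Complex.norm_real, Real.norm_of_nonneg hβ]
  unfold spectralRadius
  rw [spectrum_ema_jacobian, iSup_union, iSup_singleton, hn, sup_comm]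
end
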